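/- (Main correctness lemma of the polynomial-multiplication algorithm, utilitarian case.) Fix m, k ≥ 1, τ ≥ 1, a target quality η : ℕ, and a committee scoring function β : Finset (Fin m) → ℕ, and let p[s,j,ℓ] be the recursively defined polynomials described in the context. Then p[k*τ, τ, η] ≠ 0 if and only if there exists a Finset 𝒮 of committees with 𝒮.card = τ, whose members are pairwise disjoint and each of cardinality k, such that ∑_{S ∈ 𝒮} β S ≥ η (equivalently, by the set-packing correspondence, if and only if there is a consecutive 1-frequency committee series of length τ with committee size k and utilitarian quality at least η). -/

import Mathlib

/-!
Coefficients are natural numbers, so nothing cancels in a sum or product of polynomials and only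
supports matter. Inductively, the exponents of `p[k*j, j, ℓ]` are exactly the encodings `chi U` of
the unions `U` of `j` pairwise disjoint committees of size `k` with total score at least `ℓ`.
Indeed, adding a committee `Y` produces the exponents `chi Y + chi U`, and
`chi Y + chi U = chi (Y ∆ U) + 2 * chi (Y ∩ U)`: each common candidate turns two ones into a single
carry. As the Hamming weight is subadditive, `chi Y + chi U` attains the weight
`|Y| + |U| = k*(j+1)` only when no carry occurs, so the Hamming projection keeps precisely the
disjoint extensions.
-/

open Polynomial

/-- The characteristic-vector encoding of a set of candidates. -/
def chi {m : ℕ} (Y : Finset (Fin m)) : ℕ := ∑ i ∈ Y, 2 ^ (i : ℕ)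

/-- The Hamming weight of a natural number: the number of ones in its binary
representation. -/
def hammingWeight (e : ℕ) : ℕ := (Nat.digits 2 e).sum

/-- The Hamming projection of a polynomial to `s`: keep exactly the monomials whose
exponent has Hamming weight `s`. -/
noncomputable def hammingProj (s : ℕ) (p : Polynomial ℕ) : Polynomial ℕ :=
  ∑ e ∈ p.support.filter (fun e => hammingWeight e = s), C (p.coeff e) * X ^ e

/-- The representative polynomial: change all nonzero coefficients to `1`. -/
noncomputable def reprPoly (p : Polynomial ℕ) : Polynomial ℕ :=
  ∑ e ∈ p.support, (X : Polynomial ℕ) ^ e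

/-- The recursively defined polynomials `p[s,j,ℓ]` of the polynomial-multiplication
algorithm (utilitarian case), with the number `j` of committees as first argument. -/
noncomputable def polyP (m k : ℕ) (β : Finset (Fin m) → ℕ) :
    ℕ → ℕ → ℕ → Polynomial ℕ
  | 0, _, _ => 0
  | 1, s, ℓ =>
      if s = k then
        ∑ Y ∈ Finset.univ.filter (fun Y : Finset (Fin m) => Y.card = k ∧ ℓ ≤ β Y),
          (X : Polynomial ℕ) ^ chi Y
      else 0
  | (j + 2), s, ℓ =>
      reprPoly (hammingProj s
        (∑ Y ∈ Finset.univ.filter (fun Y : Finset (Fin m) => Y.card = k),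
          (X : Polynomial ℕ) ^ chi Y * polyP m k β (j + 1) (s - k) (ℓ - β Y)))

section HammingWeight

lemma hammingWeight_eq_length_bitIndices (n : ℕ) : hammingWeight n = n.bitIndices.length := by
  rw [hammingWeight]
  induction n using Nat.evenOddRec with
  | h0 => simp
  | h_even n ih =>
    rcases n.eq_zero_or_pos with rfl | hn
    · simp
    · simp [Nat.digits_base_mul one_lt_two hn, ih]
  | h_odd n ih =>
    rw [Nat.digits_def' one_lt_two (Nat.succ_pos (2 * n)), Nat.bitIndices_two_mul_add_one]
    simp [Nat.mul_add_div, ih, Nat.add_comm 1]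

lemma hammingWeight_two_mul (n : ℕ) : hammingWeight (2 * n) = hammingWeight n := by
  simp only [hammingWeight_eq_length_bitIndices, Nat.bitIndices_two_mul, List.length_map]

lemma hammingWeight_sum_two_pow (s : Finset ℕ) : hammingWeight (∑ i ∈ s, 2 ^ i) = s.card := by
  rw [hammingWeight_eq_length_bitIndices, ← List.toFinset_card_of_nodup Nat.bitIndices_nodup,
    Finset.toFinset_bitIndices_sum_two_pow]

/- Legendre's formula `(p - 1) * v_p(n!) = n - (digit sum of n)` turns subadditivity of the digit
sum into the divisibility `a! * b! ∣ (a + b)!`. -/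
lemma sum_digits_add_le (p : ℕ) [Fact p.Prime] (a b : ℕ) :
    (p.digits (a + b)).sum ≤ (p.digits a).sum + (p.digits b).sum := by
  have valuation_le : padicValNat p a.factorial + padicValNat p b.factorial ≤
      padicValNat p (a + b).factorial := by
    rw [← padicValNat.mul a.factorial_ne_zero b.factorial_ne_zero,
      ← padicValNat_dvd_iff_le (a + b).factorial_ne_zero]
    exact pow_padicValNat_dvd.trans (Nat.factorial_mul_factorial_dvd_factorial_add a b)
  have scaled_le := Nat.mul_le_mul_left (p - 1) valuation_le
  simp only [mul_add, sub_one_mul_padicValNat_factorial] at scaled_le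
  have ha := Nat.digit_sum_le p a
  have hb := Nat.digit_sum_le p b
  have hab := Nat.digit_sum_le p (a + b)
  omega

lemma hammingWeight_add_le (a b : ℕ) :
    hammingWeight (a + b) ≤ hammingWeight a + hammingWeight b :=
  sum_digits_add_le 2 a b

end HammingWeight

section Encoding

open scoped symmDiff

variable {m : ℕ}

lemma hammingWeight_chi (Y : Finset (Fin m)) : hammingWeight (chi Y) = Y.card := by
  simpa only [chi, Finset.sum_map, Fin.valEmbedding_apply, Finset.card_map] using
    hammingWeight_sum_two_pow (Y.map Fin.valEmbedding)

lemma chi_union {Y U : Finset (Fin m)} (h : Disjoint Y U) : chi (Y ∪ U) = chi Y + chi U :=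
  Finset.sum_union h

lemma sum_symmDiff_add_two_nsmul_sum_inter {α M : Type*} [DecidableEq α] [AddCommMonoid M]
    (s t : Finset α) (f : α → M) :
    ∑ i ∈ s ∆ t, f i + 2 • ∑ i ∈ s ∩ t, f i = ∑ i ∈ s, f i + ∑ i ∈ t, f i := by
  have sum_union_eq : ∑ i ∈ s ∆ t, f i + ∑ i ∈ s ∩ t, f i = ∑ i ∈ s ∪ t, f i := by
    rw [← Finset.sup_eq_union, ← symmDiff_sup_inf s t]
    exact (Finset.sum_union (disjoint_symmDiff_inf s t)).symm
  rw [two_nsmul, ← add_assoc, sum_union_eq, Finset.sum_union_inter]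

lemma chi_symmDiff_add_two_mul_chi_inter (Y U : Finset (Fin m)) :
    chi (Y ∆ U) + 2 * chi (Y ∩ U) = chi Y + chi U :=
  sum_symmDiff_add_two_nsmul_sum_inter Y U fun i => 2 ^ (i : ℕ)

lemma hammingWeight_chi_add_chi_add_card_inter_le (Y U : Finset (Fin m)) :
    hammingWeight (chi Y + chi U) + (Y ∩ U).card ≤ Y.card + U.card := by
  have card_eq : (Y ∆ U).card + 2 * (Y ∩ U).card = Y.card + U.card := by
    simpa using sum_symmDiff_add_two_nsmul_sum_inter Y U fun _ => (1 : ℕ)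
  have weight_le : hammingWeight (chi Y + chi U) ≤ (Y ∆ U).card + (Y ∩ U).card :=
    calc hammingWeight (chi Y + chi U)
      _ = hammingWeight (chi (Y ∆ U) + 2 * chi (Y ∩ U)) := by
          rw [chi_symmDiff_add_two_mul_chi_inter]
      _ ≤ hammingWeight (chi (Y ∆ U)) + hammingWeight (2 * chi (Y ∩ U)) :=
          hammingWeight_add_le _ _
      _ = (Y ∆ U).card + (Y ∩ U).card := by
          rw [hammingWeight_two_mul, hammingWeight_chi, hammingWeight_chi]
  omega

lemma hammingWeight_chi_add_chi_eq_iff (Y U : Finset (Fin m)) :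
    hammingWeight (chi Y + chi U) = Y.card + U.card ↔ Disjoint Y U := by
  constructor
  · intro h
    have := hammingWeight_chi_add_chi_add_card_inter_le Y U
    rw [Finset.disjoint_iff_inter_eq_empty, ← Finset.card_eq_zero]
    omega
  · intro h
    rw [← chi_union h, hammingWeight_chi, Finset.card_union_of_disjoint h]

end Encoding

section Support

lemma mem_support_sum {R ι : Type*} [Semiring R] [PartialOrder R] [CanonicallyOrderedAdd R]
    {s : Finset ι} {f : ι → R[X]} {e : ℕ} :
    e ∈ (∑ i ∈ s, f i).support ↔ ∃ i ∈ s, e ∈ (f i).support := by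
  simp [finsetSum_coeff]

lemma support_X_pow_mul {R : Type*} [Semiring R] (n : ℕ) (p : R[X]) :
    (X ^ n * p).support = p.support.map (addLeftEmbedding n) := by
  ext e
  simp only [mem_support_iff, coeff_X_pow_mul', ne_eq, ite_eq_right_iff, Classical.not_imp,
    Finset.mem_map, addLeftEmbedding_apply]
  constructor
  · rintro ⟨hle, hcoeff⟩
    exact ⟨e - n, hcoeff, Nat.add_sub_cancel' hle⟩
  · rintro ⟨d, hd, rfl⟩
    exact ⟨Nat.le_add_right n d, by rwa [Nat.add_sub_cancel_left]⟩

lemma support_reprPoly (p : ℕ[X]) : (reprPoly p).support = p.support := by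
  ext e
  simp [reprPoly, finsetSum_coeff, coeff_X_pow]

lemma support_hammingProj (s : ℕ) (p : ℕ[X]) :
    (hammingProj s p).support = p.support.filter (hammingWeight · = s) := by
  ext e
  simp [hammingProj, finsetSum_coeff, coeff_X_pow, and_comm]

end Support

section Packing

variable {α : Type*}

/-- A set packing: `j` pairwise disjoint sets, each of size `k`. -/
structure IsPacking (k j : ℕ) (𝒮 : Finset (Finset α)) : Prop where
  card_eq : 𝒮.card = j
  pairwiseDisjoint : (𝒮 : Set (Finset α)).PairwiseDisjoint id
  sized : (𝒮 : Set (Finset α)).Sized k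

variable [DecidableEq α] {k j : ℕ} {𝒮 : Finset (Finset α)} {Y : Finset α}

lemma IsPacking.card_biUnion (h : IsPacking k j 𝒮) : (𝒮.biUnion id).card = k * j := by
  rw [Finset.card_biUnion h.pairwiseDisjoint, ← h.card_eq, mul_comm]
  exact Finset.sum_const_nat h.sized

lemma IsPacking.insert (h : IsPacking k j 𝒮) (hY : Y.card = k)
    (hdisj : Disjoint Y (𝒮.biUnion id)) (hmem : Y ∉ 𝒮) : IsPacking k (j + 1) (insert Y 𝒮) where
  card_eq := by rw [Finset.card_insert_of_notMem hmem, h.card_eq]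
  pairwiseDisjoint := by
    rw [Finset.coe_insert]
    exact h.pairwiseDisjoint.insert fun S hS _ => (Finset.disjoint_biUnion_right _ _ _).1 hdisj S hS
  sized := by
    intro S hS
    rcases Finset.mem_insert.1 hS with rfl | hS
    exacts [hY, h.sized hS]

lemma IsPacking.erase (h : IsPacking k (j + 1) 𝒮) (hY : Y ∈ 𝒮) :
    IsPacking k j (𝒮.erase Y) where
  card_eq := by rw [Finset.card_erase_of_mem hY, h.card_eq, Nat.add_sub_cancel]
  pairwiseDisjoint := h.pairwiseDisjoint.subset (𝒮.erase_subset Y)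
  sized := h.sized.mono (𝒮.erase_subset Y)

lemma IsPacking.disjoint_biUnion_erase (h : IsPacking k j 𝒮) (hY : Y ∈ 𝒮) :
    Disjoint Y ((𝒮.erase Y).biUnion id) :=
  (Finset.disjoint_biUnion_right _ _ _).2 fun _ hS =>
    h.pairwiseDisjoint hY (Finset.mem_of_mem_erase hS) (Finset.ne_of_mem_erase hS).symm

/-- `U` is the union of a packing of `j` sets of size `k` whose total score under `β` is at
least `ℓ`. These sets are what the exponents of `p[k*j, j, ℓ]` encode. -/
def IsPackedUnion (β : Finset α → ℕ) (k j ℓ : ℕ) (U : Finset α) : Prop :=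
  ∃ 𝒮, IsPacking k j 𝒮 ∧ ℓ ≤ ∑ S ∈ 𝒮, β S ∧ 𝒮.biUnion id = U

variable {β : Finset α → ℕ} {ℓ : ℕ} {U : Finset α}

lemma IsPackedUnion.card_eq (h : IsPackedUnion β k j ℓ U) : U.card = k * j := by
  obtain ⟨𝒮, h𝒮, -, rfl⟩ := h
  exact h𝒮.card_biUnion

lemma isPackedUnion_one : IsPackedUnion β k 1 ℓ U ↔ U.card = k ∧ ℓ ≤ β U := by
  constructor
  · rintro ⟨𝒮, h𝒮, hscore, rfl⟩
    obtain ⟨Y, rfl⟩ := Finset.card_eq_one.1 h𝒮.card_eq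
    rw [Finset.sum_singleton] at hscore
    rw [Finset.singleton_biUnion]
    exact ⟨h𝒮.sized (Finset.mem_singleton_self Y), hscore⟩
  · rintro ⟨hcard, hscore⟩
    exact ⟨{U}, ⟨Finset.card_singleton U, by simp, by simpa using hcard⟩,
      by simpa using hscore, Finset.singleton_biUnion⟩

lemma isPackedUnion_succ (hk : 0 < k) :
    IsPackedUnion β k (j + 1) ℓ U ↔
      ∃ Y V, Y.card = k ∧ IsPackedUnion β k j (ℓ - β Y) V ∧ Disjoint Y V ∧ Y ∪ V = U := by
  constructor
  · rintro ⟨𝒮, h𝒮, hscore, rfl⟩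
    obtain ⟨Y, hY⟩ : 𝒮.Nonempty := Finset.card_pos.1 (h𝒮.card_eq ▸ j.succ_pos)
    refine ⟨Y, _, h𝒮.sized hY, ⟨𝒮.erase Y, h𝒮.erase hY, ?_, rfl⟩, h𝒮.disjoint_biUnion_erase hY, ?_⟩
    · rwa [Nat.sub_le_iff_le_add', Finset.add_sum_erase 𝒮 β hY]
    · exact Finset.biUnion_insert.symm.trans (by rw [Finset.insert_erase hY])
  · rintro ⟨Y, _, hY, ⟨𝒮, h𝒮, hscore, rfl⟩, hdisj, rfl⟩
    have Y_nonempty : Y.Nonempty := Finset.card_pos.1 (hY ▸ hk)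
    have Y_notMem : Y ∉ 𝒮 := fun hmem => Y_nonempty.ne_empty <|
      disjoint_self.1 (hdisj.mono_right (Finset.subset_biUnion_of_mem id hmem))
    refine ⟨insert Y 𝒮, h𝒮.insert hY hdisj Y_notMem, ?_, Finset.biUnion_insert⟩
    rwa [Finset.sum_insert Y_notMem, ← Nat.sub_le_iff_le_add']

end Packing

section Recursion

variable {m k j s ℓ e : ℕ} {β : Finset (Fin m) → ℕ}

lemma mem_support_polyP_one :
    e ∈ (polyP m k β 1 k ℓ).support ↔ ∃ Y, (Y.card = k ∧ ℓ ≤ β Y) ∧ chi Y = e := by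
  rw [polyP, if_pos rfl, mem_support_sum]
  simp only [support_X_pow, Finset.mem_filter_univ, Finset.mem_singleton, eq_comm]

lemma mem_support_polyP_succ (hj : 1 ≤ j) :
    e ∈ (polyP m k β (j + 1) s ℓ).support ↔
      (∃ Y, Y.card = k ∧ ∃ d ∈ (polyP m k β j (s - k) (ℓ - β Y)).support, chi Y + d = e) ∧
        hammingWeight e = s := by
  obtain ⟨i, rfl⟩ := Nat.exists_eq_add_of_le' hj
  rw [polyP, support_reprPoly, support_hammingProj, Finset.mem_filter, mem_support_sum]
  simp only [support_X_pow_mul, Finset.mem_filter_univ, Finset.mem_map, addLeftEmbedding_apply]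

lemma mem_support_polyP (hk : 0 < k) (hj : 1 ≤ j) :
    e ∈ (polyP m k β j (k * j) ℓ).support ↔ ∃ U, IsPackedUnion β k j ℓ U ∧ chi U = e := by
  induction j, hj using Nat.le_induction generalizing ℓ e with
  | base => simp only [mul_one, mem_support_polyP_one, isPackedUnion_one]
  | succ j hj ih =>
    rw [mem_support_polyP_succ hj, Nat.mul_succ, Nat.add_sub_cancel]
    simp only [ih, isPackedUnion_succ hk]
    constructor
    · rintro ⟨⟨Y, hY, _, ⟨V, hV, rfl⟩, rfl⟩, hweight⟩
      have hdisj : Disjoint Y V := by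
        rw [← hammingWeight_chi_add_chi_eq_iff, hweight, hY, hV.card_eq, add_comm]
      exact ⟨Y ∪ V, ⟨Y, V, hY, hV, hdisj, rfl⟩, chi_union hdisj⟩
    · rintro ⟨_, ⟨Y, V, hY, hV, hdisj, rfl⟩, rfl⟩
      rw [chi_union hdisj]
      refine ⟨⟨Y, hY, _, ⟨V, hV, rfl⟩, rfl⟩, ?_⟩
      rw [(hammingWeight_chi_add_chi_eq_iff Y V).2 hdisj, hY, hV.card_eq, add_comm]

end Recursion

/-- Main correctness lemma of the polynomial-multiplication algorithm (utilitarian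
case): `p[k*τ, τ, η] ≠ 0` iff there are `τ` pairwise disjoint size-`k` committees of
total score at least `η`. -/
theorem polyP_correct {m k τ η : ℕ} (hm : 1 ≤ m) (hk : 1 ≤ k) (hτ : 1 ≤ τ)
    (β : Finset (Fin m) → ℕ) :
    polyP m k β τ (k * τ) η ≠ 0 ↔
      ∃ 𝒮 : Finset (Finset (Fin m)),
        𝒮.card = τ ∧
        (∀ S ∈ 𝒮, ∀ T ∈ 𝒮, S ≠ T → S ∩ T = ∅) ∧
        (∀ S ∈ 𝒮, S.card = k) ∧
        η ≤ ∑ S ∈ 𝒮, β S := by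
  rw [← support_nonempty]
  constructor
  · rintro ⟨e, he⟩
    obtain ⟨_, ⟨𝒮, h𝒮, hscore, -⟩, -⟩ := (mem_support_polyP hk hτ).1 he
    exact ⟨𝒮, h𝒮.card_eq, fun S hS T hT hne =>
      Finset.disjoint_iff_inter_eq_empty.1 (h𝒮.pairwiseDisjoint hS hT hne), h𝒮.sized, hscore⟩
  · rintro ⟨𝒮, hcard, hdisj, hsized, hscore⟩
    have h𝒮 : IsPacking k τ 𝒮 := ⟨hcard, fun S hS T hT hne =>
      Finset.disjoint_iff_inter_eq_empty.2 (hdisj S hS T hT hne), hsized⟩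
    exact ⟨_, (mem_support_polyP hk hτ).2 ⟨_, ⟨𝒮, h𝒮, hscore, rfl⟩, rfl⟩⟩
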